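/- Let α ∈ (0,1) be irrational, h : 𝕋¹ → ℝ a C^∞ function with Fourier coefficients ĥ(m), and T(x,y) = (x+α, y+h(x) mod 1) on 𝕋² = (ℝ/ℤ)². Fix τ > 0, let E = {k ∈ ℕ : k > 1 and q_{k+1} > q_k^{1/τ+3}} and M = ⋃_{k∈E} {±m q_k : m = 1,…,a_k}, where q_k, a_k are the continued-fraction denominators and partial quotients of α. If M is infinite, then for every T-invariant Borel probability measure ρ on 𝕋², the measure complexity of (𝕋²,T,ρ) is weaker than U_τ(n) = n^τ. -/

import Mathlib

open MeasureTheory Filter Real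

/-- The Bowen-type averaged metric `d̄_n(x,y) = (1/n) ∑_{i=0}^{n-1} d(Tⁱx, Tⁱy)`. -/
noncomputable def dbar {X : Type*} [PseudoMetricSpace X] (T : X → X) (n : ℕ) (x y : X) : ℝ :=
  (∑ i ∈ Finset.range n, dist (T^[i] x) (T^[i] y)) / n

/-- The measure complexity function `S_n(d,ρ,ε)`. -/
noncomputable def measureComplexity {X : Type*} [PseudoMetricSpace X] [MeasurableSpace X]
    (T : X → X) (ρ : Measure X) (n : ℕ) (ε : ℝ) : ℕ :=
  sInf {m : ℕ | ∃ xs : Fin m → X,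
    1 - ε < (ρ (⋃ i, {y | dbar T n (xs i) y < ε})).toReal}

/-- The measure complexity of `(X,T,ρ)` is weaker than `U`. -/
def ComplexityWeakerThan {X : Type*} [PseudoMetricSpace X] [MeasurableSpace X]
    (T : X → X) (ρ : Measure X) (U : ℕ → ℝ) : Prop :=
  ∀ ε > (0 : ℝ),
    Filter.atTop.liminf (fun n : ℕ => (measureComplexity T ρ n ε : ℝ) / U n) = 0

/-!
If `p / q` is so close to `α` that `|α - p / q| ≤ A / q ^ (s + 1)`, then the Birkhoff sum of `h'`
over `q` rotation steps by `α` differs by `O(q / q ^ s)` from the sum over `q` equally spaced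
points. The latter is the derivative of a `1 / q`-periodic function `G` whose derivative of order
`s + 1` is `O(q)`. Each derivative of `G` of positive order vanishes somewhere on every period, so
integrating back gains a factor `1 / q` per order and `G' = O(q / q ^ s)`. Hence Birkhoff sums of
`h'` of length at most `n = q ^ (s + 1)` are `O(q)`, and a grid of `O(q)` points, with spacing of
order `1 / q` in the base and independent of `q` in the fibre, is `ε`-dense for `dbar T n`. Since
`q / n ^ τ → 0` when `(s + 1) τ > 1`, it suffices that `α` admits such approximations for
infinitely many `q`, i.e. is Liouville with exponent `s + 1`. If `M` is infinite then so
is `E`, and this makes `α` Liouville with exponent `1 / τ + 4`.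
-/

open scoped NNReal

section BirkhoffSum

lemma norm_birkhoffSum_le {X E : Type*} [SeminormedAddCommGroup E] {T : X → X} {f : X → E} {C : ℝ}
    (hC : ∀ x, ‖f x‖ ≤ C) (n : ℕ) (x : X) : ‖birkhoffSum T f n x‖ ≤ n * C :=
  (norm_sum_le_of_le _ fun _ _ => hC _).trans (by simp)

lemma birkhoffSum_mul {X M : Type*} [AddCommMonoid M] (T : X → X) (f : X → M) (q l : ℕ) (x : X) :
    birkhoffSum T f (q * l) x = birkhoffSum T^[q] (birkhoffSum T f q) l x := by
  induction l with
  | zero => simp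
  | succ l ih => rw [mul_add_one, birkhoffSum_add, ih, birkhoffSum_succ, Function.iterate_mul]

lemma norm_birkhoffSum_le_div_mul_add_mod_mul {X E : Type*} [SeminormedAddCommGroup E]
    {T : X → X} {f : X → E} {C D : ℝ} {q : ℕ} (hC : ∀ x, ‖f x‖ ≤ C)
    (hD : ∀ x, ‖birkhoffSum T f q x‖ ≤ D) (n : ℕ) (x : X) :
    ‖birkhoffSum T f n x‖ ≤ (n / q : ℕ) * D + (n % q : ℕ) * C := by
  conv_lhs => rw [← Nat.div_add_mod n q, birkhoffSum_add, birkhoffSum_mul]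
  exact norm_add_le_of_le (norm_birkhoffSum_le hD _ _) (norm_birkhoffSum_le hC _ _)

lemma birkhoffSum_add_right_apply {A M : Type*} [AddMonoid A] [AddCommMonoid M] (c : A) (f : A → M)
    (n : ℕ) (x : A) : birkhoffSum (· + c) f n x = ∑ j ∈ Finset.range n, f (x + j • c) := by
  simp only [birkhoffSum, add_right_iterate]

lemma dist_birkhoffSum_add_right_le {E : Type*} [SeminormedAddCommGroup E] {f : ℝ → E} {L : ℝ≥0}
    (hf : LipschitzWith L f) (c c' : ℝ) (n : ℕ) (x : ℝ) :
    dist (birkhoffSum (· + c) f n x) (birkhoffSum (· + c') f n x) ≤ n * (L * (n * |c - c'|)) := by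
  simp only [birkhoffSum_add_right_apply]
  calc dist (∑ j ∈ Finset.range n, f (x + j • c)) (∑ j ∈ Finset.range n, f (x + j • c'))
      ≤ ∑ _j ∈ Finset.range n, (L * (n * |c - c'|) : ℝ) := by
        refine dist_sum_sum_le_of_le _ fun j hj => (hf.dist_le_mul _ _).trans ?_
        have hjn : (j : ℝ) ≤ n := by exact_mod_cast (Finset.mem_range.mp hj).le
        rw [dist_add_left, Real.dist_eq, nsmul_eq_mul, nsmul_eq_mul, ← mul_sub, abs_mul,
          Nat.abs_cast]
        gcongr
    _ = n * (L * (n * |c - c'|)) := by simp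

variable {𝕜 E : Type*} [NontriviallyNormedField 𝕜] [NormedAddCommGroup E] [NormedSpace 𝕜 E]
  {f : 𝕜 → E}

lemma contDiff_comp_add_const {k : WithTop ℕ∞} (hf : ContDiff 𝕜 k f) (c : 𝕜) :
    ContDiff 𝕜 k fun x => f (x + c) :=
  hf.comp (contDiff_id.add contDiff_const)

lemma iteratedDeriv_birkhoffSum_add_right {k : ℕ} (hf : ContDiff 𝕜 k f)
    (c : 𝕜) (n : ℕ) :
    iteratedDeriv k (birkhoffSum (· + c) f n) = birkhoffSum (· + c) (iteratedDeriv k f) n := by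
  funext x
  rw [funext (birkhoffSum_add_right_apply c f n), birkhoffSum_add_right_apply,
    iteratedDeriv_fun_sum fun j _ => (contDiff_comp_add_const hf (j • c)).contDiffAt]
  exact Finset.sum_congr rfl fun j _ => congrFun (iteratedDeriv_comp_add_const k f _) x

lemma contDiff_birkhoffSum_add_right {k : WithTop ℕ∞} (hf : ContDiff 𝕜 k f)
    (c : 𝕜) (n : ℕ) : ContDiff 𝕜 k (birkhoffSum (· + c) f n) := by
  rw [funext (birkhoffSum_add_right_apply c f n)]
  exact ContDiff.sum fun j _ => contDiff_comp_add_const hf _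

lemma sum_range_natCast_zmod {M : Type*} [AddCommMonoid M] (n : ℕ) [NeZero n] (φ : ZMod n → M) :
    ∑ j ∈ Finset.range n, φ j = ∑ z, φ z :=
  Finset.sum_nbij' (fun j => (j : ZMod n)) ZMod.val (fun _ _ => Finset.mem_univ _)
    (fun z _ => Finset.mem_range.mpr z.val_lt)
    (fun _ hj => ZMod.val_cast_of_lt (Finset.mem_range.mp hj))
    (fun z _ => ZMod.natCast_zmod_val z) (fun _ _ => rfl)

lemma birkhoffSum_rat_eq_birkhoffSum_inv_den {M : Type*} [AddCommMonoid M] {f : ℝ → M}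
    (hf : Function.Periodic f 1) (r : ℚ) (x : ℝ) :
    birkhoffSum (· + (r : ℝ)) f r.den x = birkhoffSum (· + (r.den : ℝ)⁻¹) f r.den x := by
  have : NeZero r.den := ⟨r.den_ne_zero⟩
  obtain ⟨u, hu⟩ : IsUnit (r.num : ZMod r.den) :=
    (ZMod.coe_int_isUnit_iff_isCoprime _ _).mpr
      (Int.isCoprime_iff_nat_coprime.mpr r.reduced.symm)
  let φ : ZMod r.den → M := fun z => hf.lift ((x : UnitAddCircle) + ZMod.toAddCircle z)
  have hφ (m : ℤ) : φ m = f (x + m / r.den) := by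
    simp only [φ, ZMod.toAddCircle_intCast, ← AddCircle.coe_add, hf.lift_coe]
  calc birkhoffSum (· + (r : ℝ)) f r.den x
      = ∑ j ∈ Finset.range r.den, φ (j * u) := by
        rw [birkhoffSum_add_right_apply]
        refine Finset.sum_congr rfl fun j _ => ?_
        rw [hu, ← Int.cast_natCast, ← Int.cast_mul, hφ, nsmul_eq_mul, Rat.cast_def]
        push_cast
        rw [mul_div_assoc]
    -- Multiplication by the unit `r.num` permutes `ZMod r.den`.
    _ = ∑ z, φ z := by
        rw [sum_range_natCast_zmod r.den fun z => φ (z * u)]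
        exact Equiv.sum_comp u.mulRight φ
    _ = birkhoffSum (· + (r.den : ℝ)⁻¹) f r.den x := by
        rw [← sum_range_natCast_zmod r.den φ, birkhoffSum_add_right_apply]
        refine Finset.sum_congr rfl fun j _ => ?_
        rw [← Int.cast_natCast, hφ, nsmul_eq_mul, Int.cast_natCast, div_eq_mul_inv]

end BirkhoffSum

section Periodic

lemma periodic_deriv {𝕜 E : Type*} [NontriviallyNormedField 𝕜] [NormedAddCommGroup E]
    [NormedSpace 𝕜 E] {f : 𝕜 → E} {c : 𝕜} (hf : Function.Periodic f c) :
    Function.Periodic (deriv f) c := fun x => by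
  rw [← deriv_comp_add_const, hf.funext]

lemma periodic_iteratedDeriv {𝕜 E : Type*} [NontriviallyNormedField 𝕜] [NormedAddCommGroup E]
    [NormedSpace 𝕜 E] {f : 𝕜 → E} {c : 𝕜} (hf : Function.Periodic f c) (k : ℕ) :
    Function.Periodic (iteratedDeriv k f) c := by
  induction k with
  | zero => simpa only [iteratedDeriv_zero] using hf
  | succ k ih => simpa only [iteratedDeriv_succ] using periodic_deriv ih

lemma exists_forall_norm_le_of_periodic {E : Type*} [SeminormedAddCommGroup E] {f : ℝ → E} {c : ℝ}
    (hf : Function.Periodic f c) (hc : c ≠ 0) (hcont : Continuous f) : ∃ C, ∀ x, ‖f x‖ ≤ C := by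
  obtain ⟨C, hC⟩ := (hf.isBounded_of_continuous hc hcont).exists_norm_le
  exact ⟨C, fun x => hC _ (Set.mem_range_self x)⟩

lemma exists_lipschitzWith_of_periodic {E : Type*} [NormedAddCommGroup E] [NormedSpace ℝ E]
    {f : ℝ → E} {c : ℝ} (hf : Function.Periodic f c) (hc : c ≠ 0) (hdiff : ContDiff ℝ 1 f) :
    ∃ L, LipschitzWith L f := by
  obtain ⟨C, hC⟩ :=
    exists_forall_norm_le_of_periodic (periodic_deriv hf) hc (hdiff.continuous_deriv le_rfl)
  exact ⟨C.toNNReal, lipschitzWith_of_nnnorm_deriv_le (hdiff.differentiable one_ne_zero)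
    fun x => NNReal.le_toNNReal_of_coe_le (hC x)⟩

lemma abs_deriv_le_mul_of_periodic {G : ℝ → ℝ} {δ B : ℝ} (hδ : 0 < δ)
    (hper : Function.Periodic G δ) (hG : ContDiff ℝ 2 G) (hB : ∀ x, |deriv (deriv G) x| ≤ B)
    (x : ℝ) : |deriv G x| ≤ B * δ := by
  obtain ⟨c, ⟨hxc, hcx⟩, hc⟩ :=
    exists_deriv_eq_zero (lt_add_of_pos_right x hδ) hG.continuous.continuousOn (hper x).symm
  have hdiff : Differentiable ℝ (deriv G) := hG.differentiable_deriv_two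
  have hmvt : |deriv G x - deriv G c| ≤ B * |x - c| :=
    convex_univ.norm_image_sub_le_of_norm_deriv_le (fun y _ => hdiff y) (fun y _ => hB y)
      (Set.mem_univ c) (Set.mem_univ x)
  have hB0 : 0 ≤ B := (abs_nonneg _).trans (hB x)
  have hdist : |x - c| ≤ δ := abs_le.mpr ⟨by linarith, by linarith⟩
  calc |deriv G x| ≤ B * |x - c| := by simpa only [hc, sub_zero] using hmvt
    _ ≤ B * δ := by gcongr

lemma abs_deriv_le_mul_pow_of_periodic {G : ℝ → ℝ} {δ B : ℝ} (hδ : 0 < δ)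
    (hper : Function.Periodic G δ) {s : ℕ} (hG : ContDiff ℝ (s + 1) G)
    (hB : ∀ x, |iteratedDeriv (s + 1) G x| ≤ B) (x : ℝ) : |deriv G x| ≤ B * δ ^ s := by
  induction s generalizing G x with
  | zero => simpa using hB x
  | succ s ih =>
    have hG' : ContDiff ℝ (s + 1) (deriv G) := (contDiff_succ_iff_deriv.mp hG).2.2
    have hderiv2 : ∀ y, |deriv (deriv G) y| ≤ B * δ ^ s :=
      ih (periodic_deriv hper) hG' fun y => by simpa only [← iteratedDeriv_succ'] using hB y
    have h2 : ContDiff ℝ 2 G := hG.of_le (by norm_cast; omega)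
    calc |deriv G x| ≤ B * δ ^ s * δ := abs_deriv_le_mul_of_periodic hδ hper h2 hderiv2 x
      _ = B * δ ^ (s + 1) := by ring

lemma periodic_birkhoffSum_inv {E : Type*} [AddCommGroup E] {f : ℝ → E}
    (hf : Function.Periodic f 1) {q : ℕ} (hq : q ≠ 0) :
    Function.Periodic (birkhoffSum (· + (q : ℝ)⁻¹) f q) (q : ℝ)⁻¹ := fun x => by
  have h := birkhoffSum_apply_sub_birkhoffSum (· + (q : ℝ)⁻¹) f q x
  rwa [add_right_iterate, nsmul_eq_mul, mul_inv_cancel₀ (by exact_mod_cast hq), hf, sub_self,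
    sub_eq_zero] at h

end Periodic

section SmallDenominators

variable {g : ℝ → ℝ} {s : ℕ}

lemma deriv_birkhoffSum_add_right {f : ℝ → ℝ} (hf : ContDiff ℝ 1 f) (c : ℝ) (n : ℕ) :
    deriv (birkhoffSum (· + c) f n) = birkhoffSum (· + c) (deriv f) n := by
  simpa only [iteratedDeriv_one] using iteratedDeriv_birkhoffSum_add_right (k := 1) hf c n

lemma abs_birkhoffSum_inv_deriv_le {C : ℝ} (hper : Function.Periodic g 1)
    (hg : ContDiff ℝ (s + 1) g) (hC : ∀ x, |iteratedDeriv (s + 1) g x| ≤ C) {q : ℕ} (hq : q ≠ 0)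
    (x : ℝ) : |birkhoffSum (· + (q : ℝ)⁻¹) (deriv g) q x| ≤ C * (q / q ^ s) := by
  have hq0 : (0 : ℝ) < (q : ℝ)⁻¹ := by positivity
  have hB (y : ℝ) : |iteratedDeriv (s + 1) (birkhoffSum (· + (q : ℝ)⁻¹) g q) y| ≤ q * C := by
    rw [iteratedDeriv_birkhoffSum_add_right (by exact_mod_cast hg)]
    exact norm_birkhoffSum_le (f := iteratedDeriv (s + 1) g) hC q y
  rw [← deriv_birkhoffSum_add_right (hg.of_le (by norm_cast; omega))]
  calc _ ≤ q * C * (q : ℝ)⁻¹ ^ s :=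
        abs_deriv_le_mul_pow_of_periodic hq0 (periodic_birkhoffSum_inv hper hq)
          (contDiff_birkhoffSum_add_right hg _ _) hB x
    _ = C * (q / q ^ s) := by rw [inv_pow]; ring

lemma abs_birkhoffSum_den_deriv_le {C A α : ℝ} {L : ℝ≥0} (hper : Function.Periodic g 1)
    (hg : ContDiff ℝ (s + 1) g) (hL : LipschitzWith L (deriv g))
    (hC : ∀ x, |iteratedDeriv (s + 1) g x| ≤ C) {r : ℚ} (hr : |α - r| ≤ A / r.den ^ (s + 1))
    (x : ℝ) : |birkhoffSum (· + α) (deriv g) r.den x| ≤ (L * A + C) * (r.den / r.den ^ s) := by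
  have hq : (r.den : ℝ) ≠ 0 := by exact_mod_cast r.den_ne_zero
  have hrat : |birkhoffSum (· + (r : ℝ)) (deriv g) r.den x| ≤ C * (r.den / r.den ^ s) := by
    rw [birkhoffSum_rat_eq_birkhoffSum_inv_den (periodic_deriv hper)]
    exact abs_birkhoffSum_inv_deriv_le hper hg hC r.den_ne_zero x
  have hclose : |birkhoffSum (· + α) (deriv g) r.den x
      - birkhoffSum (· + (r : ℝ)) (deriv g) r.den x| ≤ L * A * (r.den / r.den ^ s) :=
    calc _ ≤ r.den * (L * (r.den * |α - r|)) := dist_birkhoffSum_add_right_le hL _ _ _ _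
      _ ≤ r.den * (L * (r.den * (A / r.den ^ (s + 1)))) := by gcongr
      _ = L * A * (r.den / r.den ^ s) := by field_simp; ring
  linarith [abs_sub_abs_le_abs_sub (birkhoffSum (· + α) (deriv g) r.den x)
    (birkhoffSum (· + (r : ℝ)) (deriv g) r.den x)]

theorem exists_forall_abs_birkhoffSum_deriv_le (hper : Function.Periodic g 1) (hs : 1 ≤ s)
    (hg : ContDiff ℝ (s + 1) g) (A : ℝ) :
    ∃ B, 0 ≤ B ∧ ∀ (α : ℝ) (r : ℚ), |α - r| ≤ A / r.den ^ (s + 1) →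
      ∀ n ≤ r.den ^ (s + 1), ∀ x, |birkhoffSum (· + α) (deriv g) n x| ≤ B * r.den := by
  have hg' : ContDiff ℝ s (deriv g) := (contDiff_succ_iff_deriv.mp hg).2.2
  obtain ⟨C₁, hC₁⟩ :=
    exists_forall_norm_le_of_periodic (periodic_deriv hper) one_ne_zero hg'.continuous
  obtain ⟨C, hC⟩ := exists_forall_norm_le_of_periodic (periodic_iteratedDeriv hper (s + 1))
    one_ne_zero (hg.continuous_iteratedDeriv' (s + 1))
  obtain ⟨L, hL⟩ := exists_lipschitzWith_of_periodic (periodic_deriv hper) one_ne_zero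
    (hg'.of_le (by exact_mod_cast hs))
  have hC₁0 : 0 ≤ C₁ := (norm_nonneg _).trans (hC₁ 0)
  have hC0 : 0 ≤ C := (norm_nonneg _).trans (hC 0)
  refine ⟨L * |A| + C + C₁, by positivity, fun α r hr n hn x => ?_⟩
  have hq : 0 < r.den := r.den_pos
  have hr' : |α - r| ≤ |A| / r.den ^ (s + 1) := hr.trans (by gcongr; exact le_abs_self A)
  have hdiv : ((n / r.den : ℕ) : ℝ) ≤ r.den ^ s := by
    exact_mod_cast Nat.div_le_of_le_mul (by rwa [← pow_succ'])
  have hmod : ((n % r.den : ℕ) : ℝ) ≤ r.den := by exact_mod_cast (Nat.mod_lt n hq).le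
  calc |birkhoffSum (· + α) (deriv g) n x|
      ≤ (n / r.den : ℕ) * ((L * |A| + C) * (r.den / r.den ^ s)) + (n % r.den : ℕ) * C₁ :=
        norm_birkhoffSum_le_div_mul_add_mod_mul hC₁
          (abs_birkhoffSum_den_deriv_le hper hg hL hC hr') n x
    _ ≤ r.den ^ s * ((L * |A| + C) * (r.den / r.den ^ s)) + r.den * C₁ := by gcongr
    _ = (L * |A| + C + C₁) * r.den := by field_simp

end SmallDenominators

section MeasureComplexity

variable {X : Type*} [PseudoMetricSpace X] {T : X → X}

lemma dbar_le_of_forall_dist_le {n : ℕ} {x y : X} {δ : ℝ} (hδ : 0 ≤ δ)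
    (hdist : ∀ i < n, dist (T^[i] x) (T^[i] y) ≤ δ) : dbar T n x y ≤ δ := by
  refine div_le_of_le_mul₀ n.cast_nonneg hδ ?_
  calc ∑ i ∈ Finset.range n, dist (T^[i] x) (T^[i] y)
      ≤ ∑ _i ∈ Finset.range n, δ := Finset.sum_le_sum fun i hi => hdist i (Finset.mem_range.mp hi)
    _ = δ * n := by simp [mul_comm]

variable [MeasurableSpace X] (ρ : Measure X)

lemma measureComplexity_le_card [IsProbabilityMeasure ρ] {n : ℕ} {ε : ℝ} (hε : 0 < ε)
    {ι : Type*} [Fintype ι] (c : ι → X) (hcover : ∀ y, ∃ i, dbar T n (c i) y < ε) :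
    measureComplexity T ρ n ε ≤ Fintype.card ι := by
  refine Nat.sInf_le ⟨c ∘ (Fintype.equivFin ι).symm, ?_⟩
  have huniv : (⋃ i, {y | dbar T n ((c ∘ (Fintype.equivFin ι).symm) i) y < ε}) = Set.univ :=
    Set.eq_univ_of_forall fun y => by
      obtain ⟨i, hi⟩ := hcover y
      exact Set.mem_iUnion.mpr ⟨Fintype.equivFin ι i, by simpa using hi⟩
  rw [huniv]
  simpa using hε

lemma liminf_eq_zero_of_frequently_le {ι : Type*} {l : Filter ι} {u : ι → ℝ}
    (hu : ∀ i, 0 ≤ u i) (hfreq : ∀ δ > 0, ∃ᶠ i in l, u i ≤ δ) : l.liminf u = 0 := by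
  have hbdd : l.IsBoundedUnder (· ≥ ·) u := isBoundedUnder_of ⟨0, hu⟩
  have hcobdd : l.IsCoboundedUnder (· ≥ ·) u := .of_frequently_le (hfreq 1 one_pos)
  refine le_antisymm (le_of_forall_pos_le_add fun δ hδ => ?_)
    (le_liminf_of_le hcobdd (.of_forall hu))
  simpa using liminf_le_of_frequently_le (hfreq δ hδ) hbdd

lemma complexityWeakerThan_rpow_of_frequently_le {r : ℕ} {τ : ℝ} (hτ : 1 < r * τ)
    (hS : ∀ ε > 0, ∃ K : ℝ, ∃ᶠ q : ℕ in atTop, measureComplexity T ρ (q ^ r) ε ≤ K * q) :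
    ComplexityWeakerThan T ρ fun n : ℕ => (n : ℝ) ^ τ := by
  intro ε hε
  obtain ⟨K, hK⟩ := hS ε hε
  refine liminf_eq_zero_of_frequently_le (fun n => by positivity) fun δ hδ => ?_
  have hr : r ≠ 0 := by rintro rfl; norm_num at hτ
  have hlim : Tendsto (fun q : ℕ => K * (q : ℝ) ^ (-(r * τ - 1))) atTop (nhds 0) := by
    simpa using ((tendsto_rpow_neg_atTop (sub_pos.mpr hτ)).comp
      tendsto_natCast_atTop_atTop).const_mul K
  refine (tendsto_pow_atTop hr).frequently ?_
  refine (hK.and_eventually ((hlim.eventually_le_const hδ).and (eventually_gt_atTop 0))).mono ?_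
  rintro q ⟨hq, hle, hq0⟩
  have hq0' : (0 : ℝ) < q := by exact_mod_cast hq0
  calc (measureComplexity T ρ (q ^ r) ε : ℝ) / ((q ^ r : ℕ) : ℝ) ^ τ
      ≤ K * q / (q : ℝ) ^ (r * τ) := by
        rw [Nat.cast_pow, ← Real.rpow_natCast, ← Real.rpow_mul hq0'.le]
        gcongr
    _ = K * (q : ℝ) ^ (-(r * τ - 1)) := by
        rw [neg_sub, Real.rpow_sub hq0', Real.rpow_one, mul_div_assoc]
    _ ≤ δ := hle

end MeasureComplexity

section SkewProduct

/-- The skew product `(x, y) ↦ (x + a, y + φ x)` over the translation by `a`. -/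
def skewProduct {A B : Type*} [Add A] [Add B] (a : A) (φ : A → B) (p : A × B) : A × B :=
  (p.1 + a, p.2 + φ p.1)

lemma iterate_skewProduct {A B : Type*} [Add A] [AddCommMonoid B] (a : A) (φ : A → B) (n : ℕ)
    (p : A × B) :
    (skewProduct a φ)^[n] p = ((· + a)^[n] p.1, p.2 + birkhoffSum (· + a) φ n p.1) := by
  induction n with
  | zero => simp
  | succ n ih =>
    rw [Function.iterate_succ_apply', ih, Function.iterate_succ_apply', birkhoffSum_succ,
      ← add_assoc]
    rfl

variable {h : UnitAddCircle → ℝ} {α : ℝ}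

lemma iterate_skewProduct_coe (n : ℕ) (t u : ℝ) :
    (skewProduct (α : UnitAddCircle) fun x => (h x : UnitAddCircle))^[n] (t, u) =
      (((t + n • α : ℝ) : UnitAddCircle),
        ((u + birkhoffSum (· + α) (fun t : ℝ => h t) n t : ℝ) : UnitAddCircle)) := by
  simp only [iterate_skewProduct, add_right_iterate, birkhoffSum_add_right_apply,
    AddCircle.coe_add, AddCircle.coe_nsmul, QuotientAddGroup.mk_sum]

lemma dist_coe_unitAddCircle_le (t t' : ℝ) :
    dist (t : UnitAddCircle) (t' : UnitAddCircle) ≤ |t - t'| := by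
  rw [dist_eq_norm, ← AddCircle.coe_sub]
  exact QuotientAddGroup.norm_mk_le_norm

lemma dist_iterate_skewProduct_le (hh : ContDiff ℝ 1 fun t : ℝ => h t) {n : ℕ} {D : ℝ}
    (hD : ∀ x, |birkhoffSum (· + α) (deriv fun t : ℝ => h t) n x| ≤ D) (t t' u u' : ℝ) :
    dist ((skewProduct (α : UnitAddCircle) fun x => (h x : UnitAddCircle))^[n] (t, u))
      ((skewProduct (α : UnitAddCircle) fun x => (h x : UnitAddCircle))^[n] (t', u')) ≤
      max |t - t'| (|u - u'| + D * |t - t'|) := by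
  set S : ℝ → ℝ := birkhoffSum (· + α) (fun t : ℝ => h t) n
  have hS : |S t - S t'| ≤ D * |t - t'| :=
    convex_univ.norm_image_sub_le_of_norm_deriv_le
      (fun y _ => (contDiff_birkhoffSum_add_right hh α n).differentiable one_ne_zero y)
      (fun y _ => by
        simpa only [S, deriv_birkhoffSum_add_right hh, Real.norm_eq_abs] using hD y)
      (Set.mem_univ t') (Set.mem_univ t)
  rw [iterate_skewProduct_coe, iterate_skewProduct_coe, Prod.dist_eq]
  refine max_le_max ?_ ?_
  · simpa only [add_sub_add_right_eq_sub] using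
      dist_coe_unitAddCircle_le (t + n • α) (t' + n • α)
  · calc _ ≤ |u + S t - (u' + S t')| := dist_coe_unitAddCircle_le _ _
      _ = |(u - u') + (S t - S t')| := by rw [add_sub_add_comm]
      _ ≤ |u - u'| + D * |t - t'| := (abs_add_le _ _).trans (by gcongr)

lemma exists_fin_abs_div_sub_le {m : ℕ} (hm : 0 < m) (x : UnitAddCircle) :
    ∃ (j : Fin m) (t : ℝ), (t : UnitAddCircle) = x ∧ |(j / m : ℝ) - t| ≤ 1 / m := by
  obtain ⟨t, ⟨ht0, ht1⟩, rfl⟩ := AddCircle.eq_coe_Ico x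
  have hm0 : (0 : ℝ) < m := by exact_mod_cast hm
  have hj : ⌊t * m⌋₊ < m := (Nat.floor_lt (by positivity)).mpr (mul_lt_of_lt_one_left hm0 ht1)
  have hle := Nat.floor_le (show 0 ≤ t * m by positivity)
  have hlt := Nat.lt_floor_add_one (t * m)
  refine ⟨⟨_, hj⟩, t, rfl, ?_⟩
  calc |(⌊t * m⌋₊ / m : ℝ) - t| = |⌊t * m⌋₊ - t * m| / m := by
        rw [← abs_of_pos hm0, ← abs_div, abs_of_pos hm0, sub_div, mul_div_cancel_right₀ _ hm0.ne']
    _ ≤ 1 / m := by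
        gcongr
        rw [abs_le]
        constructor <;> linarith

theorem measureComplexity_skewProduct_le
    (ρ : Measure (UnitAddCircle × UnitAddCircle)) [IsProbabilityMeasure ρ]
    (hh : ContDiff ℝ 1 fun t : ℝ => h t) {n q K : ℕ} {B ε : ℝ} (hB : 0 ≤ B) (hq : 0 < q)
    (hε : 0 < ε) (hK : (1 + B) / ε < K)
    (hsum : ∀ i < n, ∀ x, |birkhoffSum (· + α) (deriv fun t : ℝ => h t) i x| ≤ B * q) :
    measureComplexity (skewProduct (α : UnitAddCircle) fun x => (h x : UnitAddCircle)) ρ n ε ≤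
      K * q * K := by
  have hK0 : (0 : ℝ) < K := lt_of_le_of_lt (by positivity) hK
  have hK0' : 0 < K := by exact_mod_cast hK0
  have hq1 : (1 : ℝ) ≤ q := by exact_mod_cast hq
  let c : Fin (K * q) × Fin K → UnitAddCircle × UnitAddCircle :=
    fun i => (((i.1 / (K * q : ℕ) : ℝ) : UnitAddCircle), ((i.2 / K : ℝ) : UnitAddCircle))
  refine (measureComplexity_le_card ρ hε c ?_).trans_eq (by simp)
  rintro ⟨x, y⟩
  obtain ⟨j, t, rfl, ht⟩ := exists_fin_abs_div_sub_le (by positivity : 0 < K * q) x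
  obtain ⟨l, u, rfl, hu⟩ := exists_fin_abs_div_sub_le hK0' y
  refine ⟨(j, l), lt_of_le_of_lt (dbar_le_of_forall_dist_le (δ := (1 + B) / K) (by positivity)
    fun i hi => (dist_iterate_skewProduct_le hh (hsum i hi) _ _ _ _).trans (max_le ?_ ?_)) ?_⟩
  · calc _ ≤ 1 / ((K * q : ℕ) : ℝ) := ht
      _ ≤ (1 + B) / K := by
        push_cast
        gcongr
        · linarith
        · exact le_mul_of_one_le_right hK0.le hq1
  · calc _ ≤ 1 / (K : ℝ) + B * q * (1 / ((K * q : ℕ) : ℝ)) := by gcongr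
      _ = (1 + B) / K := by push_cast; field_simp
  · rwa [div_lt_comm₀ hK0 hε]

end SkewProduct

-- The approximations `m / n` need not be reduced, but their reduced denominators are unbounded:
-- rationals with bounded denominator stay away from the irrational number `x`.
lemma exists_frequently_rat_of_liouvilleWith {p x : ℝ} (hx : LiouvilleWith p x) (hp : 1 < p) :
    ∃ C, ∃ᶠ q : ℕ in atTop, ∃ r : ℚ, r.den = q ∧ |x - r| ≤ C / q ^ p := by
  obtain ⟨C, hC, hfreq⟩ := hx.exists_pos
  refine ⟨C, frequently_atTop.mpr fun N => ?_⟩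
  have hlim : Tendsto (fun n : ℕ => C / (n : ℝ) ^ p) atTop (nhds 0) :=
    ((tendsto_rpow_atTop (by linarith)).comp tendsto_natCast_atTop_atTop).const_div_atTop C
  obtain ⟨n, ⟨hn, m, -, hm⟩, hfar⟩ := (hfreq.and_eventually <| hlim.eventually <|
    (hx.irrational hp).eventually_forall_le_dist_cast_rat_of_den_le N).exists
  have hcast : ((m / n : ℚ) : ℝ) = m / n := by push_cast; rfl
  have hden : (m / n : ℚ).den ≤ n :=
    Nat.le_of_dvd hn (by exact_mod_cast Rat.den_dvd m n)
  refine ⟨_, le_of_lt (lt_of_not_ge fun hN => ?_), m / n, rfl, ?_⟩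
  · exact (hfar (m / n) hN).not_gt (by rwa [hcast, Real.dist_eq])
  · rw [hcast]
    have hpos : (0 : ℝ) < (m / n : ℚ).den := by exact_mod_cast (m / n : ℚ).den_pos
    exact hm.le.trans <| div_le_div_of_nonneg_left hC.le (Real.rpow_pos_of_pos hpos p)
      (Real.rpow_le_rpow hpos.le (by exact_mod_cast hden) (by linarith))

lemma exists_int_eq_nums_of (v : ℝ) (n : ℕ) : ∃ m : ℤ, (GenContFract.of v).nums n = m := by
  suffices h : ∀ n, ∃ m : ℤ, ((GenContFract.of v).contsAux n).a = m from h (n + 1)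
  intro n
  induction n using Nat.twoStepInduction with
  | zero => exact ⟨1, by simp⟩
  | one => exact ⟨⌊v⌋, by simp⟩
  | more n ih₀ ih₁ =>
    rcases hs : (GenContFract.of v).s.get? n with _ | gp
    · simpa only [GenContFract.contsAux, hs] using ih₁
    · obtain ⟨m₀, hm₀⟩ := ih₀
      obtain ⟨m₁, hm₁⟩ := ih₁
      obtain ⟨hone, b, hb⟩ := GenContFract.of_partNum_eq_one_and_exists_int_partDen_eq hs
      refine ⟨b * m₁ + m₀, ?_⟩
      rw [GenContFract.contsAux_recurrence hs rfl rfl, hone, hb, hm₀, hm₁]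
      push_cast
      ring

lemma not_terminatedAt_of_irrational {v : ℝ} (hv : Irrational v) (n : ℕ) :
    ¬(GenContFract.of v).TerminatedAt n := fun h => by
  obtain ⟨r, hr⟩ := GenContFract.exists_rat_eq_of_terminates ⟨n, h⟩
  exact hv ⟨r, hr.symm⟩

lemma tendsto_dens_atTop_of_irrational {v : ℝ} (hv : Irrational v) :
    Tendsto (GenContFract.of v).dens atTop atTop := by
  refine tendsto_atTop_mono' _ ((eventually_ge_atTop 5).mono fun n hn => ?_)
    tendsto_natCast_atTop_atTop
  calc (n : ℝ) ≤ Nat.fib (n + 1) :=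
        mod_cast (Nat.le_fib_self hn).trans Nat.fib_le_fib_succ
    _ ≤ (GenContFract.of v).dens n :=
        GenContFract.succ_nth_fib_le_of_nth_den (.inr (not_terminatedAt_of_irrational hv _))

theorem liouvilleWith_of_frequently_dens_rpow_lt {v σ : ℝ} (hv : Irrational v) {q : ℕ → ℕ}
    (hq : ∀ n, (GenContFract.of v).dens n = q n)
    (hfreq : ∃ᶠ n in atTop, (q n : ℝ) ^ σ < q (n + 1)) : LiouvilleWith (σ + 1) v := by
  have htop : Tendsto q atTop atTop := tendsto_natCast_atTop_iff.mp <|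
    (tendsto_dens_atTop_of_irrational hv).congr hq
  refine ⟨1, htop.frequently <|
    (hfreq.and_eventually (htop.eventually_gt_atTop 0)).mono ?_⟩
  rintro n ⟨hlt, hpos⟩
  have hpos' : (0 : ℝ) < q n := by exact_mod_cast hpos
  obtain ⟨m, hm⟩ := exists_int_eq_nums_of v n
  refine ⟨m, fun h => hv ⟨m / q n, by push_cast; exact h.symm⟩, ?_⟩
  calc |v - m / q n| ≤ 1 / (q n * q (n + 1)) := by
        simpa only [GenContFract.conv_eq_num_div_den, hm, hq] using
          GenContFract.abs_sub_convs_le (not_terminatedAt_of_irrational hv n)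
    _ < 1 / (q n * (q n : ℝ) ^ σ) := by gcongr
    _ = 1 / (q n : ℝ) ^ (σ + 1) := by rw [Real.rpow_add_one hpos'.ne', mul_comm]

/-- `β 1, β 2, …` is an orbit of the Gauss map `x ↦ 1 / x - ⌊1 / x⌋` and `a 1, a 2, …` are the
integer parts of the `1 / β k`, that is, the partial quotients of `β 1` when `β 1 ∈ [0, 1)`. -/
def IsGaussOrbit (a : ℕ → ℕ) (β : ℕ → ℝ) : Prop :=
  ∀ k : ℕ, 1 ≤ k → (a k : ℤ) = ⌊1 / β k⌋ ∧ β (k + 1) = 1 / β k - a k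

namespace IsGaussOrbit

variable {a : ℕ → ℕ} {β : ℕ → ℝ}

lemma irrational (h : IsGaussOrbit a β) (hirr : Irrational (β 1)) (n : ℕ) :
    Irrational (β (n + 1)) := by
  induction n with
  | zero => exact hirr
  | succ n ih =>
    rw [(h (n + 1) n.succ_pos).2, one_div]
    exact (irrational_inv_iff.mpr ih).sub_natCast _

lemma intFractPair_of_inv (h : IsGaussOrbit a β) (n : ℕ) :
    GenContFract.IntFractPair.of (β (n + 1))⁻¹ = ⟨a (n + 1), β (n + 2)⟩ := by
  obtain ⟨ha, hβ⟩ := h (n + 1) n.succ_pos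
  rw [one_div] at ha hβ
  rw [GenContFract.IntFractPair.of, Int.fract, ← ha, hβ, Int.cast_natCast]

lemma intFractPair_stream (h : IsGaussOrbit a β) (hirr : Irrational (β 1))
    (hβ1 : β 1 ∈ Set.Ico (0 : ℝ) 1) (n : ℕ) :
    GenContFract.IntFractPair.stream (β 1) (n + 1) = some ⟨a (n + 1), β (n + 2)⟩ := by
  induction n with
  | zero =>
    have hstream : GenContFract.IntFractPair.stream (β 1) 0 = some ⟨⌊β 1⌋, β 1⟩ := by
      rw [GenContFract.IntFractPair.stream_zero, GenContFract.IntFractPair.of,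
        Int.fract_eq_self.mpr hβ1]
    rw [GenContFract.IntFractPair.stream_succ_of_some hstream hirr.ne_zero]
    exact congrArg some (h.intFractPair_of_inv 0)
  | succ n ih =>
    rw [GenContFract.IntFractPair.stream_succ_of_some ih (h.irrational hirr (n + 1)).ne_zero,
      h.intFractPair_of_inv]

lemma dens_of_eq (h : IsGaussOrbit a β) (hirr : Irrational (β 1))
    (hβ1 : β 1 ∈ Set.Ico (0 : ℝ) 1) {q : ℕ → ℕ} (hq1 : q 1 = 1) (hq2 : q 2 = a 1)
    (hqrec : ∀ k : ℕ, 2 ≤ k → q (k + 1) = a k * q k + q (k - 1)) (n : ℕ) :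
    (GenContFract.of (β 1)).dens n = q (n + 1) := by
  have hs (n : ℕ) : (GenContFract.of (β 1)).s.get? n = some ⟨1, a (n + 1)⟩ := by
    simpa using GenContFract.get?_of_eq_some_of_succ_get?_intFractPair_stream
      (h.intFractPair_stream hirr hβ1 n)
  induction n using Nat.twoStepInduction with
  | zero => simp [hq1]
  | one => rw [GenContFract.first_den_eq (hs 0), hq2]
  | more n ih₀ ih₁ =>
    rw [GenContFract.dens_recurrence (hs (n + 1)) ih₀ ih₁, hqrec (n + 2) (by omega)]
    push_cast
    simp

end IsGaussOrbit

lemma finite_setOf_multiples {E : Set ℕ} (hE : E.Finite) (a q : ℕ → ℕ) :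
    {m : ℤ | ∃ k ∈ E, ∃ j : ℕ, 1 ≤ j ∧ j ≤ a k ∧
      (m = (j * q k : ℕ) ∨ m = -((j * q k : ℕ) : ℤ))}.Finite := by
  refine (hE.biUnion fun k _ =>
    Set.finite_Icc (-((a k * q k : ℕ) : ℤ)) ((a k * q k : ℕ) : ℤ)).subset ?_
  rintro m ⟨k, hk, j, -, hj, hm⟩
  have hle : j * q k ≤ a k * q k := by gcongr
  exact Set.mem_biUnion hk ⟨by omega, by omega⟩

lemma exists_nat_le_inv_add_two_one_lt_mul {τ : ℝ} (hτ : 0 < τ) :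
    ∃ r : ℕ, 2 ≤ r ∧ (r : ℝ) ≤ 1 / τ + 2 ∧ 1 < r * τ := by
  have hle : (⌊1 / τ⌋₊ : ℝ) ≤ 1 / τ := Nat.floor_le (by positivity)
  have hlt : 1 / τ < ⌊1 / τ⌋₊ + 1 := Nat.lt_floor_add_one _
  refine ⟨⌊1 / τ⌋₊ + 2, by omega, by push_cast; linarith, ?_⟩
  rw [← div_lt_iff₀ hτ]
  push_cast
  linarith

theorem complexity_weaker_of_resonant_set_infinite_general
    {α : ℝ} {r : ℕ} (hr : 2 ≤ r) (hα : LiouvilleWith r α) {h : UnitAddCircle → ℝ}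
    (hh : ContDiff ℝ r fun t : ℝ => h t)
    {T : UnitAddCircle × UnitAddCircle → UnitAddCircle × UnitAddCircle}
    (hT : ∀ p, T p = (p.1 + (α : UnitAddCircle), p.2 + (h p.1 : UnitAddCircle)))
    {τ : ℝ} (hτ : 1 < r * τ) (ρ : Measure (UnitAddCircle × UnitAddCircle))
    [IsProbabilityMeasure ρ] : ComplexityWeakerThan T ρ fun n : ℕ => (n : ℝ) ^ τ := by
  obtain rfl : T = skewProduct (α : UnitAddCircle) fun x => (h x : UnitAddCircle) := funext hT
  obtain ⟨s, rfl⟩ : ∃ s, r = s + 1 := ⟨r - 1, by omega⟩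
  have hper : Function.Periodic (fun t : ℝ => h t) 1 := fun t => by simp
  obtain ⟨A, hA⟩ := exists_frequently_rat_of_liouvilleWith hα (by exact_mod_cast hr)
  obtain ⟨B, hB, hsum⟩ :=
    exists_forall_abs_birkhoffSum_deriv_le hper (by omega : 1 ≤ s) (by exact_mod_cast hh) A
  refine complexityWeakerThan_rpow_of_frequently_le ρ hτ fun ε hε => ?_
  obtain ⟨K, hK⟩ := exists_nat_gt ((1 + B) / ε)
  refine ⟨K * K, hA.mono ?_⟩
  rintro _ ⟨r, rfl, hr⟩
  rw [Real.rpow_natCast] at hr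
  have hcount := measureComplexity_skewProduct_le ρ (hh.of_le (by norm_cast; omega)) hB r.den_pos
    hε hK fun i hi => hsum α r hr i hi.le
  calc _ ≤ ((K * r.den * K : ℕ) : ℝ) := by exact_mod_cast hcount
    _ = K * K * r.den := by push_cast; ring

/-- If the resonant set `M` is infinite, then every invariant Borel probability measure of the
smooth skew product `T(x,y) = (x+α, y+h(x) mod 1)` has measure complexity weaker than `n^τ`. -/
theorem complexity_weaker_of_resonant_set_infinite
    (α : ℝ) (hirr : Irrational α) (hα : α ∈ Set.Ioo (0 : ℝ) 1)
    (h : AddCircle (1 : ℝ) → ℝ)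
    (hsmooth : ContDiff ℝ ((⊤ : ℕ∞) : WithTop ℕ∞) (fun t : ℝ => h ((t : AddCircle (1 : ℝ)))))
    (T : AddCircle (1 : ℝ) × AddCircle (1 : ℝ) → AddCircle (1 : ℝ) × AddCircle (1 : ℝ))
    (hT : ∀ p, T p = (p.1 + (α : AddCircle (1 : ℝ)), p.2 + ((h p.1 : ℝ) : AddCircle (1 : ℝ))))
    -- the partial quotients `a_k` of `α`, via the Gauss map
    (a : ℕ → ℕ) (β : ℕ → ℝ) (hβ1 : β 1 = α)
    (hGauss : ∀ k : ℕ, 1 ≤ k → (a k : ℤ) = ⌊1 / β k⌋ ∧ β (k + 1) = 1 / β k - a k)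
    -- the denominators `q_k` of the convergents of `α`
    (q : ℕ → ℕ) (hq1 : q 1 = 1) (hq2 : q 2 = a 1)
    (hqrec : ∀ k : ℕ, 2 ≤ k → q (k + 1) = a k * q k + q (k - 1))
    (τ : ℝ) (hτ : 0 < τ)
    (E : Set ℕ) (hE : E = {k : ℕ | 1 < k ∧ ((q k : ℝ)) ^ (1 / τ + 3) < (q (k + 1) : ℝ)})
    (M : Set ℤ) (hM : M = {m : ℤ | ∃ k ∈ E, ∃ j : ℕ, 1 ≤ j ∧ j ≤ a k ∧
      (m = (j * q k : ℕ) ∨ m = -((j * q k : ℕ) : ℤ))})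
    (hMinf : M.Infinite)
    (ρ : Measure (AddCircle (1 : ℝ) × AddCircle (1 : ℝ)))
    (hρprob : IsProbabilityMeasure ρ) (hρinv : MeasurePreserving T ρ ρ) :
    ComplexityWeakerThan T ρ (fun n : ℕ => (n : ℝ) ^ τ) := by
  subst hE hM hβ1
  have hfreq := Nat.frequently_atTop_iff_infinite.mpr fun hfin =>
    hMinf (finite_setOf_multiples hfin a q)
  rw [← map_add_atTop_eq_nat 1, frequently_map] at hfreq
  have hliouville : LiouvilleWith (1 / τ + 3 + 1) (β 1) :=
    liouvilleWith_of_frequently_dens_rpow_lt hirr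
      (IsGaussOrbit.dens_of_eq hGauss hirr (Set.Ioo_subset_Ico_self hα) hq1 hq2 hqrec)
      (hfreq.mono fun _ hk => hk.2)
  obtain ⟨r, hr, hrle, hrτ⟩ := exists_nat_le_inv_add_two_one_lt_mul hτ
  exact complexity_weaker_of_resonant_set_infinite_general hr (hliouville.mono (by linarith))
    (hsmooth.of_le (by exact_mod_cast le_top)) hT hrτ ρ
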